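/- Assume the LAG setup, and in addition: 𝓛 is convex with a global minimizer θ* and 𝓛* = 𝓛(θ*); 0 < α ≤ 1/L; β_1 = (1 − αL)/(2α); β_1 ≥ β_2 ≥ … ≥ β_D > 0; the constant c := min{α/2, min_{1≤d≤D} (β_d − β_{d+1} − ξ_d/(2α))/β_d} is strictly positive; and there is R > 0 such that ‖θ^k − θ*‖² + Σ_{d=1}^D β_d ‖θ^{k+1−d} − θ^{k−d}‖² ≤ R for all k ≥ 1. Then for every K ≥ 2, 𝓛(θ^K) − 𝓛(θ*) ≤ R / (c (K − 1)). -/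

import Mathlib

open Finset

/-!
A LAG step is an inexact gradient step whose error the trigger condition bounds by past squared
displacements. With `β 1 = (1 - α L) / (2 α)`, the new displacement term of the Lyapunov function
`V` absorbs exactly what the descent lemma leaves over, and the slack
`β d - β (d + 1) - ξ d / (2 α) ≥ c β d` pays for the error, so that `V` decreases by at least
`c G`, where `G` is the squared gradient norm plus the `β`-weighted displacements. Convexity and
Cauchy–Schwarz give `(V⁺)² ≤ R G`; the positive part allows an arbitrary comparison point in place
of the minimizer. Hence `V (k + 1) ≤ V k - (c / R) (V k)⁺ ^ 2`, the discrete form of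
`V' = -(c / R) V²`, which forces `V` below `R / (c (k - 1))`.
-/

section NormedSpace

variable {E : Type*} [NormedAddCommGroup E] [NormedSpace ℝ E]

lemma hasDerivAt_comp_add_smul {F : Type*} [NormedAddCommGroup F] [NormedSpace ℝ F]
    {f : E → F} {f' : E →L[ℝ] F} {x v : E} {t : ℝ}
    (hf : HasFDerivAt f f' (x + t • v)) :
    HasDerivAt (fun s : ℝ => f (x + s • v)) (f' v) t := by
  have hline : HasDerivAt (fun s : ℝ => x + s • v) v t := by
    simpa using ((hasDerivAt_id t).smul_const v).const_add x
  exact hf.comp_hasDerivAt t hline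

lemma apply_add_le_of_lipschitz_fderiv {f : E → ℝ} (hf : Differentiable ℝ f) {L : ℝ}
    (hL : ∀ x y, ‖fderiv ℝ f x - fderiv ℝ f y‖ ≤ L * ‖x - y‖) (x v : E) :
    f (x + v) ≤ f x + fderiv ℝ f x v + L / 2 * ‖v‖ ^ 2 := by
  have hderiv (t : ℝ) :
      HasDerivAt (fun s : ℝ => f (x + s • v)) (fderiv ℝ f (x + t • v) v) t :=
    hasDerivAt_comp_add_smul (hf _).hasFDerivAt
  have hbound_deriv (t : ℝ) :
      HasDerivAt (fun s : ℝ => f x + s * fderiv ℝ f x v + L / 2 * ‖v‖ ^ 2 * s ^ 2)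
        (fderiv ℝ f x v + L * t * ‖v‖ ^ 2) t := by
    refine ((((hasDerivAt_id t).mul_const (fderiv ℝ f x v)).const_add (f x)).add
      (((hasDerivAt_id t).pow 2).const_mul (L / 2 * ‖v‖ ^ 2))).congr_deriv ?_
    simp only [id_eq]
    ring
  have hderiv_le (t : ℝ) (ht : 0 ≤ t) :
      fderiv ℝ f (x + t • v) v ≤ fderiv ℝ f x v + L * t * ‖v‖ ^ 2 := by
    have hlip : ‖fderiv ℝ f (x + t • v) - fderiv ℝ f x‖ ≤ L * (t * ‖v‖) := by
      simpa [norm_smul, abs_of_nonneg ht] using hL (x + t • v) x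
    calc fderiv ℝ f (x + t • v) v
        = fderiv ℝ f x v + (fderiv ℝ f (x + t • v) - fderiv ℝ f x) v := by simp
      _ ≤ fderiv ℝ f x v + L * (t * ‖v‖) * ‖v‖ := by
        gcongr
        exact (le_abs_self _).trans (ContinuousLinearMap.le_of_opNorm_le _ hlip v)
      _ = fderiv ℝ f x v + L * t * ‖v‖ ^ 2 := by ring
  simpa using image_le_of_deriv_right_le_deriv_boundary
    (fun t _ => (hderiv t).continuousAt.continuousWithinAt)
    (fun t _ => (hderiv t).hasDerivWithinAt) (by simp)
    (fun t _ => (hbound_deriv t).continuousAt.continuousWithinAt)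
    (fun t _ => (hbound_deriv t).hasDerivWithinAt)
    (fun t ht => hderiv_le t ht.1) (Set.right_mem_Icc.2 (zero_le_one (α := ℝ)))

lemma add_fderiv_sub_le_of_convexOn {s : Set E} {f : E → ℝ} (hf : ConvexOn ℝ s f)
    {f' : E →L[ℝ] ℝ} {x y : E} (hx : x ∈ s) (hy : y ∈ s) (hf' : HasFDerivAt f f' x) :
    f x + f' (y - x) ≤ f y := by
  have hline : HasDerivAt (f ∘ AffineMap.lineMap x y) (f' (y - x)) (0 : ℝ) :=
    HasFDerivAt.comp_hasDerivAt 0 (by simpa using hf') AffineMap.hasDerivAt_lineMap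
  have hslope := (hf.comp_affineMap (AffineMap.lineMap (k := ℝ) x y)).le_slope_of_hasDerivAt
    (by simpa using hx) (by simpa using hy) zero_lt_one hline
  simp only [slope_def_field, Function.comp_apply, AffineMap.lineMap_apply_one,
    AffineMap.lineMap_apply_zero, sub_zero, div_one] at hslope
  linarith

end NormedSpace

lemma norm_sum_sq_le_card_sq_mul {ι E : Type*} [SeminormedAddCommGroup E] {s : Finset ι}
    {e : ι → E} {b : ℝ} (he : ∀ i ∈ s, ‖e i‖ ^ 2 ≤ b) :
    ‖∑ i ∈ s, e i‖ ^ 2 ≤ (#s : ℝ) ^ 2 * b :=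
  calc ‖∑ i ∈ s, e i‖ ^ 2
      ≤ (∑ i ∈ s, ‖e i‖) ^ 2 := by gcongr; exact norm_sum_le _ _
    _ ≤ #s * ∑ i ∈ s, ‖e i‖ ^ 2 := sq_sum_le_card_mul_sum_sq
    _ ≤ #s * (#s * b) := by gcongr; simpa using sum_le_card_nsmul s _ b he
    _ = (#s : ℝ) ^ 2 * b := by ring

/-- Cauchy–Schwarz for the vectors `(a, √w)` and `(b, √w)`. -/
lemma mul_add_sq_le_sq_add_mul_sq_add {a b w : ℝ} (hw : 0 ≤ w) :
    (a * b + w) ^ 2 ≤ (a ^ 2 + w) * (b ^ 2 + w) := by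
  linarith [mul_nonneg hw (sq_nonneg (a - b))]

lemma mul_natCast_mul_le_one_of_succ_le_sub_mul_sq_posPart {u : ℕ → ℝ} {a : ℝ} (ha : 0 ≤ a)
    (hu : ∀ n, u (n + 1) ≤ u n - a * (u n)⁺ ^ 2) (n : ℕ) : a * n * u n ≤ 1 := by
  induction n with
  | zero => simp
  | succ n ih =>
    rcases le_total (u n) 0 with hn | hn
    · have hsucc : u (n + 1) ≤ 0 := (hu n).trans ((sub_le_self _ (by positivity)).trans hn)
      exact (mul_nonpos_of_nonneg_of_nonpos (by positivity) hsucc).trans zero_le_one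
    · have hmul : 0 ≤ a * n * u n := by positivity
      calc a * (n + 1 : ℕ) * u (n + 1)
          ≤ a * (n + 1 : ℕ) * (u n - a * u n ^ 2) := by
            gcongr
            simpa only [posPart_eq_self.2 hn] using hu n
        _ = 1 - ((a * u n - (1 - a * n * u n) / 2) ^ 2
              + (1 - a * n * u n) * (1 - (1 - a * n * u n) / 4)) := by push_cast; ring
        _ ≤ 1 := sub_le_self _ <| add_nonneg (sq_nonneg _) <|
          mul_nonneg (by linarith) (by linarith [hmul])

section Gradient

open scoped Gradient RealInnerProductSpace

variable {E : Type*} [NormedAddCommGroup E] [InnerProductSpace ℝ E] [CompleteSpace E]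

lemma norm_fderiv_sub_fderiv_eq_norm_gradient_sub (f g : E → ℝ) (x y : E) :
    ‖fderiv ℝ f x - fderiv ℝ g y‖ = ‖∇ f x - ∇ g y‖ := by
  rw [← toDual_gradient, ← toDual_gradient, ← map_sub, LinearIsometryEquiv.norm_map]

lemma gradient_fun_sum {ι : Type*} {s : Finset ι} {f : ι → E → ℝ} {x : E}
    (hf : ∀ i ∈ s, DifferentiableAt ℝ (f i) x) :
    ∇ (fun z => ∑ i ∈ s, f i z) x = ∑ i ∈ s, ∇ (f i) x := by
  simp only [gradient, fderiv_fun_sum hf, map_sum]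

lemma apply_sub_smul_le_of_lipschitz_gradient {f : E → ℝ} (hf : Differentiable ℝ f) {L : ℝ}
    (hL : ∀ x y, ‖∇ f x - ∇ f y‖ ≤ L * ‖x - y‖) (α : ℝ) (x v : E) :
    f (x - α • v) ≤ f x - α / 2 * ‖∇ f x‖ ^ 2 - (1 - α * L) / (2 * α) * ‖α • v‖ ^ 2
      + α / 2 * ‖v - ∇ f x‖ ^ 2 := by
  have hdescent : f (x - α • v) ≤ f x - α * ⟪∇ f x, v⟫ + L / 2 * ‖α • v‖ ^ 2 := by
    simpa [← sub_eq_add_neg, ← inner_gradient_left, real_inner_smul_right] using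
      apply_add_le_of_lipschitz_fderiv hf (by
        simpa only [norm_fderiv_sub_fderiv_eq_norm_gradient_sub] using hL) x (-(α • v))
  have hpolar : ‖v - ∇ f x‖ ^ 2 = ‖v‖ ^ 2 - 2 * ⟪∇ f x, v⟫ + ‖∇ f x‖ ^ 2 := by
    rw [norm_sub_sq_real, real_inner_comm]
  have hnorm : ‖α • v‖ ^ 2 = α ^ 2 * ‖v‖ ^ 2 := by rw [norm_smul, mul_pow, Real.norm_eq_abs, sq_abs]
  refine hdescent.trans_eq ?_
  rw [hpolar, hnorm]
  field_simp
  ring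

lemma sub_le_norm_gradient_mul_norm_sub {s : Set E} {f : E → ℝ} (hf : ConvexOn ℝ s f) {x y : E}
    (hx : x ∈ s) (hy : y ∈ s) (hdiff : DifferentiableAt ℝ f x) :
    f x - f y ≤ ‖∇ f x‖ * ‖x - y‖ := by
  have htangent : f x + ⟪∇ f x, y - x⟫ ≤ f y := by
    simpa only [inner_gradient_left] using
      add_fderiv_sub_le_of_convexOn hf hx hy hdiff.hasFDerivAt
  calc f x - f y ≤ ⟪∇ f x, x - y⟫ := by
        rw [← neg_sub y x, inner_neg_right]
        linarith
    _ ≤ ‖∇ f x‖ * ‖x - y‖ := real_inner_le_norm _ _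

lemma norm_sum_gradient_sub_sq_le {ι : Type*} [Fintype ι] {f : ι → E → ℝ}
    {x : E} (hf : ∀ i, DifferentiableAt ℝ (f i) x) {α T : ℝ} (hT : 0 ≤ T) {y : ι → E}
    (hy : ∀ i, y i ≠ x →
      ‖∇ (f i) (y i) - ∇ (f i) x‖ ^ 2 ≤ 1 / (α ^ 2 * (Fintype.card ι : ℝ) ^ 2) * T) :
    ‖∑ i, ∇ (f i) (y i) - ∇ (fun z => ∑ i, f i z) x‖ ^ 2 ≤ T / α ^ 2 := by
  have herr (i : ι) :
      ‖∇ (f i) (y i) - ∇ (f i) x‖ ^ 2 ≤ 1 / (α ^ 2 * (Fintype.card ι : ℝ) ^ 2) * T := by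
    by_cases hi : y i = x
    · rw [hi, sub_self, norm_zero, zero_pow two_ne_zero]
      positivity
    · exact hy i hi
  rw [gradient_fun_sum fun i _ => hf i, ← sum_sub_distrib]
  calc ‖∑ i, (∇ (f i) (y i) - ∇ (f i) x)‖ ^ 2
      ≤ (Fintype.card ι : ℝ) ^ 2 * (1 / (α ^ 2 * (Fintype.card ι : ℝ) ^ 2) * T) :=
        norm_sum_sq_le_card_sq_mul fun i _ => herr i
    _ = (Fintype.card ι : ℝ) ^ 2 * ((Fintype.card ι : ℝ) ^ 2)⁻¹ * (T / α ^ 2) := by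
        rw [one_div, mul_inv]
        ring
    _ ≤ T / α ^ 2 := mul_le_of_le_one_left (by positivity) mul_inv_le_one

end Gradient

section StepEnergy

variable {E : Type*} [SeminormedAddCommGroup E]

/-- The weighted sum `∑ d, w d ‖θ^(k+1-d) - θ^(k-d)‖²` of the last `D` squared displacements of a
sequence. The weights `ξ` give the right-hand side of the trigger condition, the weights `β` the
displacement term of the Lyapunov function. -/
def stepEnergy (D : ℕ) (w : ℕ → ℝ) (θ : ℤ → E) (k : ℤ) : ℝ :=
  ∑ d ∈ Icc 1 D, w d * ‖θ (k + 1 - (d : ℤ)) - θ (k - (d : ℤ))‖ ^ 2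

lemma stepEnergy_nonneg {D : ℕ} {w : ℕ → ℝ} (hw : ∀ d ∈ Icc 1 D, 0 ≤ w d) (θ : ℤ → E) (k : ℤ) :
    0 ≤ stepEnergy D w θ k :=
  sum_nonneg fun d hd => mul_nonneg (hw d hd) (by positivity)

lemma stepEnergy_add_one {D : ℕ} {w : ℕ → ℝ} (hw : w (D + 1) = 0) (θ : ℤ → E) (k : ℤ) :
    stepEnergy D w θ (k + 1)
      = w 1 * ‖θ (k + 1) - θ k‖ ^ 2 + stepEnergy D (fun d => w (d + 1)) θ k := by
  have hextend : stepEnergy D w θ (k + 1) = stepEnergy (D + 1) w θ (k + 1) := by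
    simp [stepEnergy, sum_Icc_succ_top, hw]
  rw [hextend, stepEnergy, ← add_sum_Ioc_eq_sum_Icc (Nat.le_add_left 1 D),
    ← Icc_add_one_left_eq_Ioc, ← map_add_right_Icc, sum_map]
  simp [stepEnergy]

lemma mul_stepEnergy_le {D : ℕ} {β ξ : ℕ → ℝ} {α c : ℝ}
    (hc : ∀ d ∈ Icc 1 D, c * β d ≤ β d - β (d + 1) - ξ d / (2 * α)) (θ : ℤ → E) (k : ℤ) :
    c * stepEnergy D β θ k ≤ stepEnergy D β θ k - stepEnergy D (fun d => β (d + 1)) θ k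
      - stepEnergy D ξ θ k / (2 * α) := by
  simp only [stepEnergy, mul_sum, sum_div, ← sum_sub_distrib]
  refine sum_le_sum fun d hd => ?_
  calc c * (β d * ‖θ (k + 1 - (d : ℤ)) - θ (k - (d : ℤ))‖ ^ 2)
      = c * β d * ‖θ (k + 1 - (d : ℤ)) - θ (k - (d : ℤ))‖ ^ 2 := (mul_assoc _ _ _).symm
    _ ≤ (β d - β (d + 1) - ξ d / (2 * α)) * ‖θ (k + 1 - (d : ℤ)) - θ (k - (d : ℤ))‖ ^ 2 := by
        gcongr
        exact hc d hd
    _ = _ := by ring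

end StepEnergy

section Lyapunov

open scoped Gradient

variable {E : Type*} [NormedAddCommGroup E] {f : E → ℝ} {θ : ℤ → E} {D : ℕ} {β : ℕ → ℝ}
  {k : ℤ} {c : ℝ}

/-- The Lyapunov function `V^k` of LAG. The value `𝓛*` is replaced by the value of `f` at an
arbitrary comparison point `x`. -/
def lagLyapunov (f : E → ℝ) (x : E) (D : ℕ) (β : ℕ → ℝ) (θ : ℤ → E) (k : ℤ) : ℝ :=
  f (θ k) - f x + stepEnergy D β θ k

lemma sub_le_div_of_lagLyapunov_add_one_le {x : E} {R : ℝ} (hc : 0 < c) (hR : 0 < R)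
    (hβ : ∀ d ∈ Icc 1 D, 0 ≤ β d)
    (hV : ∀ k : ℤ, 1 ≤ k → lagLyapunov f x D β θ (k + 1)
      ≤ lagLyapunov f x D β θ k - c / R * (lagLyapunov f x D β θ k)⁺ ^ 2)
    {K : ℤ} (hK : 2 ≤ K) : f (θ K) - f x ≤ R / (c * ((K : ℝ) - 1)) := by
  obtain ⟨n, rfl⟩ : ∃ n : ℕ, K = n + 1 := ⟨(K - 1).toNat, by omega⟩
  have hn : (0 : ℝ) < n := by norm_cast; omega
  have hrate : c / R * n * lagLyapunov f x D β θ (n + 1) ≤ 1 :=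
    mul_natCast_mul_le_one_of_succ_le_sub_mul_sq_posPart
      (u := fun n : ℕ => lagLyapunov f x D β θ (n + 1)) (by positivity)
      (fun m => by exact_mod_cast hV (m + 1) (by omega)) n
  calc f (θ (n + 1)) - f x ≤ lagLyapunov f x D β θ (n + 1) :=
        le_add_of_nonneg_right (stepEnergy_nonneg hβ θ _)
    _ ≤ 1 / (c / R * n) := by rwa [le_div_iff₀' (by positivity)]
    _ = R / (c * (((n + 1 : ℤ) : ℝ) - 1)) := by
        push_cast
        rw [add_sub_cancel_right]
        field_simp

variable [InnerProductSpace ℝ E] [CompleteSpace E]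

lemma lagLyapunov_add_one_le (hf : Differentiable ℝ f) {L : ℝ}
    (hL : ∀ x y, ‖∇ f x - ∇ f y‖ ≤ L * ‖x - y‖) {α : ℝ} (hα : 0 < α) {ξ : ℕ → ℝ}
    (hβ1 : β 1 = (1 - α * L) / (2 * α)) (hβD : β (D + 1) = 0) (hcα : c ≤ α / 2)
    (hc : ∀ d ∈ Icc 1 D, c * β d ≤ β d - β (d + 1) - ξ d / (2 * α)) {v : E}
    (hstep : θ (k + 1) = θ k - α • v)
    (herr : ‖v - ∇ f (θ k)‖ ^ 2 ≤ stepEnergy D ξ θ k / α ^ 2) (x : E) :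
    lagLyapunov f x D β θ (k + 1)
      ≤ lagLyapunov f x D β θ k - c * (‖∇ f (θ k)‖ ^ 2 + stepEnergy D β θ k) := by
  have hdisp : ‖θ (k + 1) - θ k‖ ^ 2 = ‖α • v‖ ^ 2 := by
    rw [hstep, sub_sub_cancel_left, norm_neg]
  have hdescent := apply_sub_smul_le_of_lipschitz_gradient hf hL α (θ k) v
  rw [← hstep, ← hβ1, ← hdisp] at hdescent
  have hshift := stepEnergy_add_one hβD θ k
  have herror : α / 2 * ‖v - ∇ f (θ k)‖ ^ 2 ≤ stepEnergy D ξ θ k / (2 * α) :=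
    calc α / 2 * ‖v - ∇ f (θ k)‖ ^ 2 ≤ α / 2 * (stepEnergy D ξ θ k / α ^ 2) := by gcongr
      _ = stepEnergy D ξ θ k / (2 * α) := by field_simp
  have hslack := mul_stepEnergy_le hc θ k
  have hgrad : c * ‖∇ f (θ k)‖ ^ 2 ≤ α / 2 * ‖∇ f (θ k)‖ ^ 2 := by gcongr
  unfold lagLyapunov
  linarith

lemma sq_posPart_lagLyapunov_le (hf : ConvexOn ℝ Set.univ f) (hdiff : DifferentiableAt ℝ f (θ k))
    (hβ : ∀ d ∈ Icc 1 D, 0 ≤ β d) {x : E} {R : ℝ}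
    (hR : ‖θ k - x‖ ^ 2 + stepEnergy D β θ k ≤ R) :
    (lagLyapunov f x D β θ k)⁺ ^ 2 ≤ R * (‖∇ f (θ k)‖ ^ 2 + stepEnergy D β θ k) := by
  have henergy := stepEnergy_nonneg hβ θ k
  have hle : (lagLyapunov f x D β θ k)⁺ ≤ ‖θ k - x‖ * ‖∇ f (θ k)‖ + stepEnergy D β θ k := by
    refine sup_le ?_ (by positivity)
    rw [mul_comm]
    exact add_le_add_left (sub_le_norm_gradient_mul_norm_sub hf trivial trivial hdiff) _
  calc (lagLyapunov f x D β θ k)⁺ ^ 2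
      ≤ (‖θ k - x‖ * ‖∇ f (θ k)‖ + stepEnergy D β θ k) ^ 2 := by gcongr
    _ ≤ (‖θ k - x‖ ^ 2 + stepEnergy D β θ k) * (‖∇ f (θ k)‖ ^ 2 + stepEnergy D β θ k) :=
        mul_add_sq_le_sq_add_mul_sq_add henergy
    _ ≤ R * (‖∇ f (θ k)‖ ^ 2 + stepEnergy D β θ k) := by gcongr

end Lyapunov

theorem lag_convex_convergence_general {E ι : Type*} [NormedAddCommGroup E]
    [InnerProductSpace ℝ E] [CompleteSpace E] [Fintype ι] {f : ι → E → ℝ}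
    (hf : ∀ m, Differentiable ℝ (f m)) {L : ℝ}
    (hL : ∀ x y, ‖gradient (fun z => ∑ m, f m z) x - gradient (fun z => ∑ m, f m z) y‖
      ≤ L * ‖x - y‖)
    (hconv : ConvexOn ℝ Set.univ (fun z => ∑ m, f m z)) (x : E) {α : ℝ} (hα : 0 < α)
    {D : ℕ} {ξ β : ℕ → ℝ} (hξ : ∀ d ∈ Icc 1 D, 0 ≤ ξ d)
    (hβ1 : β 1 = (1 - α * L) / (2 * α)) (hβ : ∀ d ∈ Icc 1 D, 0 ≤ β d) (hβD : β (D + 1) = 0)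
    {c : ℝ} (hc : 0 < c) (hcα : c ≤ α / 2)
    (hcβ : ∀ d ∈ Icc 1 D, c * β d ≤ β d - β (d + 1) - ξ d / (2 * α))
    {θ : ℤ → E} {θhat : ℤ → ι → E}
    (hstep : ∀ k : ℤ, 1 ≤ k → θ (k + 1) = θ k - α • ∑ m, gradient (f m) (θhat k m))
    (htrig : ∀ k : ℤ, 1 ≤ k → ∀ m, θhat k m ≠ θ k →
      ‖gradient (f m) (θhat k m) - gradient (f m) (θ k)‖ ^ 2
        ≤ 1 / (α ^ 2 * (Fintype.card ι : ℝ) ^ 2) * stepEnergy D ξ θ k)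
    {R : ℝ} (hR : 0 < R)
    (hRbound : ∀ k : ℤ, 1 ≤ k → ‖θ k - x‖ ^ 2 + stepEnergy D β θ k ≤ R)
    (K : ℤ) (hK : 2 ≤ K) :
    (∑ m, f m (θ K)) - (∑ m, f m x) ≤ R / (c * ((K : ℝ) - 1)) := by
  have hsum : Differentiable ℝ (fun z => ∑ m, f m z) := Differentiable.fun_sum fun m _ => hf m
  refine sub_le_div_of_lagLyapunov_add_one_le (f := fun z => ∑ m, f m z) hc hR hβ
    (fun k hk => ?_) hK
  have herr := norm_sum_gradient_sub_sq_le (fun m => hf m (θ k)) (stepEnergy_nonneg hξ θ k)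
    (htrig k hk)
  have hdecrease := lagLyapunov_add_one_le hsum hL hα hβ1 hβD hcα hcβ (hstep k hk) herr x
  have hsq := sq_posPart_lagLyapunov_le hconv (hsum (θ k)) hβ (hRbound k hk)
  refine hdecrease.trans (sub_le_sub_left ?_ _)
  rw [div_mul_eq_mul_div, div_le_iff₀' hR, mul_left_comm]
  gcongr

/-- Theorem 2: the O(1/K) convergence of LAG in the convex case. -/
theorem lag_convex_convergence {n : ℕ}
    (M D : ℕ) (hM : 1 ≤ M) (hD : 1 ≤ D)
    (Lf : Fin M → EuclideanSpace ℝ (Fin n) → ℝ)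
    (hdiff : ∀ m, Differentiable ℝ (Lf m))
    (L : ℝ) (hL : 0 < L)
    (hsmooth : ∀ x y, ‖gradient (fun z => ∑ m, Lf m z) x
        - gradient (fun z => ∑ m, Lf m z) y‖ ≤ L * ‖x - y‖)
    (hconv : ConvexOn ℝ Set.univ (fun z => ∑ m, Lf m z))
    (θstar : EuclideanSpace ℝ (Fin n))
    (hmin : ∀ x, (∑ m, Lf m θstar) ≤ ∑ m, Lf m x)
    (α : ℝ) (hα : 0 < α) (hαL : α ≤ 1 / L)
    (ξ : ℕ → ℝ) (hξ : ∀ d ∈ Finset.Icc 1 D, 0 ≤ ξ d)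
    (β : ℕ → ℝ) (hβ1 : β 1 = (1 - α * L) / (2 * α))
    (hβmono : ∀ d : ℕ, 1 ≤ d → d < D → β (d + 1) ≤ β d)
    (hβpos : ∀ d ∈ Finset.Icc 1 D, 0 < β d)
    (hβD : β (D + 1) = 0)
    (c : ℝ)
    (hc_def : c = min (α / 2)
      ((Finset.Icc 1 D).inf' (Finset.nonempty_Icc.mpr hD)
        (fun d => (β d - β (d + 1) - ξ d / (2 * α)) / β d)))
    (hc : 0 < c)
    (θ : ℤ → EuclideanSpace ℝ (Fin n))
    (hpast : ∀ k : ℤ, k ≤ 1 → θ k = θ 1)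
    (Mc : ℤ → Finset (Fin M))
    (θhat : ℤ → Fin M → EuclideanSpace ℝ (Fin n))
    (hhat0 : ∀ m, θhat 0 m = θ 1)
    (hhat : ∀ k : ℤ, 1 ≤ k → ∀ m : Fin M,
      (m ∈ Mc k → θhat k m = θhat (k - 1) m) ∧ (m ∉ Mc k → θhat k m = θ k))
    (hupd : ∀ k : ℤ, 1 ≤ k →
      θ (k + 1) = θ k - α • ∑ m, gradient (Lf m) (θhat k m))
    (htrig : ∀ k : ℤ, 1 ≤ k → ∀ m ∈ Mc k,
      ‖gradient (Lf m) (θhat k m) - gradient (Lf m) (θ k)‖ ^ 2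
        ≤ (1 / (α ^ 2 * (M : ℝ) ^ 2)) *
            ∑ d ∈ Finset.Icc 1 D, ξ d * ‖θ (k + 1 - (d : ℤ)) - θ (k - (d : ℤ))‖ ^ 2)
    (R : ℝ) (hR : 0 < R)
    (hRbound : ∀ k : ℤ, 1 ≤ k →
      ‖θ k - θstar‖ ^ 2
        + ∑ d ∈ Finset.Icc 1 D, β d * ‖θ (k + 1 - (d : ℤ)) - θ (k - (d : ℤ))‖ ^ 2 ≤ R) :
    ∀ K : ℤ, 2 ≤ K →
      (∑ m, Lf m (θ K)) - (∑ m, Lf m θstar) ≤ R / (c * ((K : ℝ) - 1)) :=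
  lag_convex_convergence_general hdiff hsmooth hconv θstar hα hξ hβ1 (fun d hd => (hβpos d hd).le)
    hβD hc (hc_def.trans_le (min_le_left _ _))
    (fun d hd => (le_div_iff₀ (hβpos d hd)).1 (hc_def.trans_le ((min_le_right _ _).trans
      (inf'_le (fun d => (β d - β (d + 1) - ξ d / (2 * α)) / β d) hd))))
    hupd (fun k hk m hm => by
      simpa only [Fintype.card_fin, stepEnergy] using
        htrig k hk m (by_contra fun h => hm ((hhat k hk m).2 h)))
    hR hRbound
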